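/- Define Φ₁₀ : [0,π] → ℝ by Φ₁₀(x) := (4/π) Σ_{k=1}^∞ [2k(4k² − 13)/(1 − 4k²)³] sin(2kx). Then the series converges, Φ₁₀ is twice continuously differentiable on [0,π], Φ₁₀(0) = Φ₁₀(π) = 0, ∫₀^π Φ₁₀(x) sin(x) dx = 0, and Φ₁₀''(x) + Φ₁₀(x) = cos(x) − 3(π − 2x) sin(x) for all x ∈ (0,π). -/

import Mathlib

open Set Real

noncomputable section

/-- The `k`-th Fourier coefficient in the series defining `Φ₁₀`. -/
def phiCoeff (k : ℕ) : ℝ := 2 * (k:ℝ) * (4 * (k:ℝ)^2 - 13) / (1 - 4 * (k:ℝ)^2)^3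

/-- `Φ₁₀(x) = (4/π) Σ_{k=1}^∞ [2k(4k²−13)/(1−4k²)³] sin(2kx)`. -/
def Phi10 (x : ℝ) : ℝ :=
  (4/π) * ∑' k : ℕ, phiCoeff (k + 1) * Real.sin (2 * ((k:ℝ) + 1) * x)

/-!
The equation `u'' + u = cos x - 3 (π - 2 x) sin x` has an elementary solution that vanishes at both
endpoints and is odd about the midpoint `π / 2`, namely
`(2 x - π) sin x + (3 / 2) x (π - x) cos x`. Integrating by parts against `sin (2 n x)` multiplies
the sine coefficients of `u` by `1 - 4 n²` when passing to those of `u'' + u`, up to a boundary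
term. Descending from `cos` (where `u'' + u = 0`) through the right-hand side to the solution, one
divides by `1 - 4 n²` three times, which gives the coefficients of `Φ₁₀`. These are summable, so
`Φ₁₀` is the elementary solution on `[0, π]`.
-/

section SineSeries

variable {T : ℝ} {f : ℝ → ℝ}

/-- The `n`-th coefficient `(2 / T) ∫₀ᵀ f x sin (2 π n x / T) dx` of the Fourier sine series of `f`
with period `T`. It is indexed by `ℤ` to match the complex Fourier coefficients. -/
def sineCoeff (T : ℝ) (f : ℝ → ℝ) (n : ℤ) : ℝ :=
  2 / T * ∫ x in (0 : ℝ)..T, f x * sin (2 * π * n / T * x)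

lemma sineCoeff_zero_right : sineCoeff T f 0 = 0 := by
  simp [sineCoeff]

lemma sineCoeff_neg (n : ℤ) : sineCoeff T f (-n) = -sineCoeff T f n := by
  simp [sineCoeff, neg_div]

lemma sineCoeff_const_mul (c : ℝ) (n : ℤ) :
    sineCoeff T (fun x ↦ c * f x) n = c * sineCoeff T f n := by
  simp only [sineCoeff, mul_assoc, intervalIntegral.integral_const_mul]
  ring

lemma sineCoeff_of_second_order {u u' h : ℝ → ℝ} {c : ℝ} (hT : T ≠ 0)
    (hu : ∀ x ∈ uIcc 0 T, HasDerivAt u (u' x) x)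
    (hu' : ∀ x ∈ uIcc 0 T, HasDerivAt u' (h x - c * u x) x)
    (hh : ContinuousOn h (uIcc 0 T)) (n : ℤ) :
    (c - (2 * π * n / T) ^ 2) * sineCoeff T u n =
      sineCoeff T h n + 2 / T * (2 * π * n / T) * (u T - u 0) := by
  set ω : ℝ := 2 * π * n / T with hω
  have hωT : ω * T = n * (2 * π) := by rw [hω]; field_simp
  have hsin : sin (ω * T) = 0 := by
    rw [hωT, ← zero_add (n * (2 * π) : ℝ), sin_add_int_mul_two_pi, sin_zero]
  have hcos : cos (ω * T) = 1 := by rw [hωT, cos_int_mul_two_pi]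
  have hu_cont : ContinuousOn u (uIcc 0 T) := HasDerivAt.continuousOn hu
  have int_h : IntervalIntegrable (fun x ↦ h x * sin (ω * x)) MeasureTheory.volume 0 T :=
    ContinuousOn.intervalIntegrable (by fun_prop)
  have int_u : IntervalIntegrable (fun x ↦ (ω ^ 2 - c) * (u x * sin (ω * x)))
      MeasureTheory.volume 0 T :=
    ContinuousOn.intervalIntegrable (by fun_prop)
  have wronskian_deriv : ∀ x ∈ uIcc 0 T,
      HasDerivAt (fun y ↦ u' y * sin (ω * y) - u y * (ω * cos (ω * y)))
        (h x * sin (ω * x) + (ω ^ 2 - c) * (u x * sin (ω * x))) x := fun x hx ↦ by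
    have hlin : HasDerivAt (fun y ↦ ω * y) ω x := by
      simpa using (hasDerivAt_id x).const_mul ω
    refine (((hu' x hx).mul hlin.sin).sub
      ((hu x hx).mul (hlin.cos.const_mul ω))).congr_deriv ?_
    ring
  have green := intervalIntegral.integral_eq_sub_of_hasDerivAt wronskian_deriv (int_h.add int_u)
  rw [intervalIntegral.integral_add int_h int_u, intervalIntegral.integral_const_mul] at green
  simp only [hsin, hcos, mul_zero, sin_zero, cos_zero, mul_one, zero_sub] at green
  rw [sineCoeff, sineCoeff, ← hω]
  linear_combination -(2 / T) * green

lemma integral_eq_zero_of_comp_sub_eq_neg {E : Type*} [NormedAddCommGroup E] [NormedSpace ℝ E]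
    {a b : ℝ} {g : ℝ → E} (hg : ∀ x ∈ uIcc a b, g (a + b - x) = -g x) :
    ∫ x in a..b, g x = 0 := by
  have reflect : ∫ x in a..b, g (a + b - x) = ∫ x in a..b, g x := by
    rw [intervalIntegral.integral_comp_sub_left, add_sub_cancel_right, add_sub_cancel_left]
  rw [intervalIntegral.integral_congr hg, intervalIntegral.integral_neg] at reflect
  have : IsAddTorsionFree E := .of_isTorsionFree ℝ E
  exact self_eq_neg.mp reflect.symm

lemma fourier_coe_eq_cos_add_sin_mul_I (n : ℤ) (x : ℝ) :
    fourier n (x : AddCircle T) =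
      (cos (2 * π * n / T * x) : ℂ) + sin (2 * π * n / T * x) * Complex.I := by
  rw [fourier_coe_apply, Complex.ofReal_cos, Complex.ofReal_sin, ← Complex.exp_mul_I]
  push_cast
  ring_nf

lemma fourierCoeff_eq_sineCoeff [hT : Fact (0 < T)] {F : AddCircle T → ℂ}
    (hF : ∀ x ∈ Icc 0 T, F x = f x) (hf : ContinuousOn f (Icc 0 T))
    (hodd : ∀ x ∈ Icc 0 T, f (T - x) = -f x) (n : ℤ) :
    fourierCoeff F n = -(Complex.I / 2) * sineCoeff T f n := by
  have hT0 : T ≠ 0 := hT.out.ne'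
  set ω : ℝ := 2 * π * n / T with hω
  rw [← uIcc_of_le hT.out.le] at hF hf hodd
  have hcos : ∫ x in (0 : ℝ)..T, f x * cos (ω * x) = 0 := by
    refine integral_eq_zero_of_comp_sub_eq_neg fun x hx ↦ ?_
    have hωx : ω * (T - x) = n * (2 * π) - ω * x := by rw [hω]; field_simp
    rw [zero_add, hodd x hx, hωx, cos_int_mul_two_pi_sub, neg_mul]
  have integrand : EqOn (fun x : ℝ ↦ fourier (-n) (x : AddCircle T) • F x)
      (fun x ↦ ((f x * cos (ω * x) : ℝ) : ℂ) - Complex.I * (f x * sin (ω * x) : ℝ))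
      (uIcc 0 T) := fun x hx ↦ by
    simp only [smul_eq_mul, hF x hx, fourier_coe_eq_cos_add_sin_mul_I, Int.cast_neg, mul_neg,
      neg_div, neg_mul, cos_neg, sin_neg, ← hω]
    push_cast
    ring
  rw [fourierCoeff_eq_intervalIntegral F n 0, zero_add,
    intervalIntegral.integral_congr integrand, intervalIntegral.integral_sub,
    intervalIntegral.integral_const_mul, intervalIntegral.integral_ofReal,
    intervalIntegral.integral_ofReal, hcos, sineCoeff, ← hω, Complex.real_smul]
  · push_cast
    ring
  all_goals exact ContinuousOn.intervalIntegrable (by fun_prop)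

lemma exists_continuousMap_addCircle_eqOn_Icc [hT : Fact (0 < T)] {X : Type*} [TopologicalSpace X]
    {g : ℝ → X} (hg : ContinuousOn g (Icc 0 T)) (hper : g 0 = g T) :
    ∃ G : C(AddCircle T, X), ∀ x ∈ Icc 0 T, G x = g x := by
  refine ⟨⟨AddCircle.liftIco T 0 g, AddCircle.liftIco_zero_continuous hper hg⟩, fun x hx ↦ ?_⟩
  rcases hx.2.lt_or_eq with hlt | rfl
  · exact AddCircle.liftIco_zero_coe_apply ⟨hx.1, hlt⟩
  · have := AddCircle.liftIco_zero_coe_apply (f := g) (left_mem_Ico.mpr hT.out)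
    simpa [AddCircle.coe_period, hper] using this

theorem hasSum_sineCoeff_mul_sin (hT : 0 < T) (hf : ContinuousOn f (Icc 0 T)) (h0 : f 0 = 0)
    (hodd : ∀ x ∈ Icc 0 T, f (T - x) = -f x) (hsum : Summable fun k : ℕ ↦ sineCoeff T f k)
    {x : ℝ} (hx : x ∈ Icc 0 T) :
    HasSum (fun k : ℕ ↦ sineCoeff T f k * sin (2 * π * k / T * x)) (f x) := by
  have : Fact (0 < T) := ⟨hT⟩
  have hfT : f T = 0 := by simpa [h0] using hodd 0 (left_mem_Icc.mpr hT.le)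
  obtain ⟨F, hF⟩ := exists_continuousMap_addCircle_eqOn_Icc (T := T) (g := fun x ↦ (f x : ℂ))
    (by fun_prop) (by rw [h0, hfT])
  have coeff := fourierCoeff_eq_sineCoeff hF hf hodd
  have hsum_int : Summable (sineCoeff T f) :=
    hsum.of_nat_of_neg (by simpa only [sineCoeff_neg] using hsum.neg)
  have fourier_summable : Summable (fourierCoeff F) := by
    rw [funext coeff]
    exact (Complex.summable_ofReal.mpr hsum_int).mul_left (-(Complex.I / 2))
  have fourier_hasSum :=
    (has_pointwise_sum_fourier_series_of_summable fourier_summable (x : AddCircle T)).nat_add_neg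
  simp only [coeff, hF x hx, sineCoeff_neg, sineCoeff_zero_right,
    fourier_coe_eq_cos_add_sin_mul_I] at fourier_hasSum
  rw [← Complex.hasSum_ofReal]
  convert! fourier_hasSum using 1
  · ext k
    simp only [Int.cast_neg, Int.cast_natCast, mul_neg, neg_div, neg_mul, cos_neg, sin_neg,
      smul_eq_mul]
    push_cast
    linear_combination
      (sineCoeff T f k : ℂ) * Complex.sin (2 * π * k / T * x) * Complex.I_sq
  · simp

end SineSeries

section ClosedForm

/-- The right-hand side of the equation `Φ₁₀'' + Φ₁₀ = cos x - 3 (π - 2 x) sin x`. -/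
def phi10Forcing (x : ℝ) : ℝ := cos x - 3 * (π - 2 * x) * sin x

/-- The elementary function that the series `Φ₁₀` represents on `[0, π]`, found by solving
`u'' + u = phi10Forcing` with zero boundary values. -/
def phi10ClosedForm (x : ℝ) : ℝ := (2 * x - π) * sin x + 3 / 2 * (x * (π - x)) * cos x

lemma contDiff_phi10Forcing {n : WithTop ℕ∞} : ContDiff ℝ n phi10Forcing := by
  unfold phi10Forcing
  fun_prop

lemma contDiff_phi10ClosedForm {n : WithTop ℕ∞} : ContDiff ℝ n phi10ClosedForm := by
  unfold phi10ClosedForm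
  fun_prop

lemma deriv_phi10Forcing :
    deriv phi10Forcing = fun x ↦ 5 * sin x - 3 * (π - 2 * x) * cos x := by
  ext x
  have hlin := (((hasDerivAt_id x).const_mul 2).const_sub π).const_mul 3
  refine (((hasDerivAt_cos x).sub (hlin.mul (hasDerivAt_sin x))).congr_deriv ?_).deriv
  simp only [id]
  ring

lemma hasDerivAt_deriv_phi10Forcing (x : ℝ) :
    HasDerivAt (deriv phi10Forcing) (12 * cos x - phi10Forcing x) x := by
  rw [deriv_phi10Forcing]
  have hlin := (((hasDerivAt_id x).const_mul 2).const_sub π).const_mul 3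
  refine (((hasDerivAt_sin x).const_mul 5).sub (hlin.mul (hasDerivAt_cos x))).congr_deriv ?_
  simp only [phi10Forcing, id]
  ring

lemma deriv_phi10ClosedForm :
    deriv phi10ClosedForm =
      fun x ↦ (2 - 3 / 2 * (x * (π - x))) * sin x + (π / 2 - x) * cos x := by
  ext x
  have hid := hasDerivAt_id x
  have hlin := (hid.const_mul 2).sub_const π
  have hquad := (hid.mul (hid.const_sub π)).const_mul (3 / 2)
  refine (((hlin.mul (hasDerivAt_sin x)).add
    (hquad.mul (hasDerivAt_cos x))).congr_deriv ?_).deriv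
  simp only [Pi.mul_apply, id]
  ring

lemma hasDerivAt_deriv_phi10ClosedForm (x : ℝ) :
    HasDerivAt (deriv phi10ClosedForm) (phi10Forcing x - phi10ClosedForm x) x := by
  rw [deriv_phi10ClosedForm]
  have hid := hasDerivAt_id x
  have hquad := ((hid.mul (hid.const_sub π)).const_mul (3 / 2)).const_sub 2
  refine ((hquad.mul (hasDerivAt_sin x)).add
    ((hid.const_sub (π / 2)).mul (hasDerivAt_cos x))).congr_deriv ?_
  simp only [phi10Forcing, phi10ClosedForm, Pi.mul_apply, id]
  ring

lemma phi10ClosedForm_zero : phi10ClosedForm 0 = 0 := by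
  simp [phi10ClosedForm]

lemma phi10ClosedForm_pi : phi10ClosedForm π = 0 := by
  simp [phi10ClosedForm]

lemma phi10ClosedForm_pi_sub (x : ℝ) : phi10ClosedForm (π - x) = -phi10ClosedForm x := by
  simp only [phi10ClosedForm, sin_pi_sub, cos_pi_sub]
  ring

lemma integral_phi10ClosedForm_mul_sin : ∫ x in (0 : ℝ)..π, phi10ClosedForm x * sin x = 0 :=
  integral_eq_zero_of_comp_sub_eq_neg fun x _ ↦ by
    rw [zero_add, phi10ClosedForm_pi_sub, sin_pi_sub, neg_mul]

end ClosedForm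

section Coefficients

lemma one_sub_four_mul_sq_ne_zero (n : ℤ) : (1 - 4 * (n : ℝ) ^ 2) ≠ 0 := by
  have : 1 - 4 * n ^ 2 ≠ 0 := by lia
  exact_mod_cast this

lemma sineCoeff_pi_of_second_order {u h : ℝ → ℝ} (hu : Differentiable ℝ u)
    (hu' : ∀ x, HasDerivAt (deriv u) (h x - u x) x) (hh : Continuous h) (n : ℤ) :
    sineCoeff π u n = (sineCoeff π h n + 4 * n / π * (u π - u 0)) / (1 - 4 * n ^ 2) := by
  have freq : 2 * π * n / π = 2 * (n : ℝ) := by field_simp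
  have key := sineCoeff_of_second_order (c := 1) pi_ne_zero (fun x _ ↦ (hu x).hasDerivAt)
    (fun x _ ↦ by simpa only [one_mul] using hu' x) hh.continuousOn n
  rw [freq] at key
  rw [eq_div_iff (one_sub_four_mul_sq_ne_zero n)]
  linear_combination key

lemma sineCoeff_cos (n : ℤ) : sineCoeff π cos n = -(8 * n / π) / (1 - 4 * n ^ 2) := by
  have hderiv (x : ℝ) : HasDerivAt (deriv cos) (0 - cos x) x := by
    simpa only [deriv_cos', zero_sub] using (hasDerivAt_sin x).fun_neg
  rw [sineCoeff_pi_of_second_order differentiable_cos hderiv continuous_const]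
  simp only [sineCoeff, zero_mul, intervalIntegral.integral_zero, mul_zero, cos_pi, cos_zero]
  ring

lemma sineCoeff_phi10Forcing (n : ℤ) :
    sineCoeff π phi10Forcing n = 8 * n * (4 * n ^ 2 - 13) / π / (1 - 4 * n ^ 2) ^ 2 := by
  have hn := one_sub_four_mul_sq_ne_zero n
  rw [sineCoeff_pi_of_second_order (contDiff_phi10Forcing.differentiable one_ne_zero)
    hasDerivAt_deriv_phi10Forcing (by fun_prop), sineCoeff_const_mul, sineCoeff_cos]
  simp only [phi10Forcing, sin_pi, cos_pi, sin_zero, cos_zero, mul_zero]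
  generalize hD : 1 - 4 * (n : ℝ) ^ 2 = D at hn ⊢
  field_simp
  linear_combination 8 * n * hD

lemma sineCoeff_phi10ClosedForm (k : ℕ) :
    sineCoeff π phi10ClosedForm k = 4 / π * phiCoeff k := by
  rw [sineCoeff_pi_of_second_order (contDiff_phi10ClosedForm.differentiable one_ne_zero)
    hasDerivAt_deriv_phi10ClosedForm (contDiff_phi10Forcing (n := 0)).continuous,
    sineCoeff_phi10Forcing, phi10ClosedForm_zero, phi10ClosedForm_pi, phiCoeff, Int.cast_natCast]
  generalize 1 - 4 * (k : ℝ) ^ 2 = D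
  ring

lemma abs_phiCoeff_le (k : ℕ) : |phiCoeff k| ≤ 1 / (k : ℝ) ^ 3 := by
  rcases Nat.eq_zero_or_pos k with rfl | hk
  · simp [phiCoeff]
  have hk1 : (1 : ℝ) ≤ k := by exact_mod_cast hk
  have hsq : (1 : ℝ) ≤ (k : ℝ) ^ 2 := one_le_pow₀ hk1
  have numerator : |4 * (k : ℝ) ^ 2 - 13| ≤ 9 * (k : ℝ) ^ 2 :=
    abs_le.mpr ⟨by linarith, by linarith⟩
  have denominator : 3 * (k : ℝ) ^ 2 ≤ |1 - 4 * (k : ℝ) ^ 2| :=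
    le_abs.mpr (Or.inr (by linarith))
  calc |phiCoeff k| = 2 * k * |4 * (k : ℝ) ^ 2 - 13| / |1 - 4 * (k : ℝ) ^ 2| ^ 3 := by
        simp only [phiCoeff, abs_div, abs_mul, abs_pow, Nat.abs_cast, Nat.abs_ofNat]
    _ ≤ 2 * k * (9 * (k : ℝ) ^ 2) / (3 * (k : ℝ) ^ 2) ^ 3 := by gcongr
    _ = 2 / 3 / (k : ℝ) ^ 3 := by field_simp; norm_num
    _ ≤ 1 / (k : ℝ) ^ 3 := by gcongr; norm_num

lemma summable_phiCoeff : Summable phiCoeff :=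
  .of_norm_bounded (Real.summable_one_div_nat_pow.mpr (by norm_num)) abs_phiCoeff_le

lemma summable_phiCoeff_mul_sin (x : ℝ) :
    Summable fun k : ℕ ↦ phiCoeff (k + 1) * sin (2 * ((k : ℝ) + 1) * x) :=
  .of_norm_bounded ((summable_nat_add_iff 1).mpr summable_phiCoeff.norm) fun k ↦ by
    rw [norm_mul]
    exact mul_le_of_le_one_right (norm_nonneg _) (abs_sin_le_one _)

end Coefficients

lemma eqOn_Phi10_phi10ClosedForm : EqOn Phi10 phi10ClosedForm (Icc 0 π) := fun x hx ↦ by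
  have series : HasSum (fun k : ℕ ↦ 4 / π * (phiCoeff k * sin (2 * k * x)))
      (phi10ClosedForm x) := by
    convert hasSum_sineCoeff_mul_sin pi_pos
      (contDiff_phi10ClosedForm (n := 0)).continuous.continuousOn phi10ClosedForm_zero
      (fun x _ ↦ phi10ClosedForm_pi_sub x)
      (by simpa only [sineCoeff_phi10ClosedForm] using summable_phiCoeff.mul_left _) hx using 2
      with k
    rw [sineCoeff_phi10ClosedForm, mul_assoc]
    field_simp
  rw [Phi10, ← tsum_mul_left, ← series.tsum_eq, series.summable.tsum_eq_zero_add]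
  simp

/-- The series defining `Φ₁₀` converges, `Φ₁₀` is `C²` on `[0,π]`,
vanishes at the endpoints, is orthogonal to `sin` on `(0,π)`, and solves
`Φ₁₀'' + Φ₁₀ = cos x − 3(π − 2x) sin x` on `(0,π)`. -/
theorem Phi10_properties :
    (∀ x : ℝ, Summable (fun k : ℕ => phiCoeff (k + 1) * Real.sin (2 * ((k:ℝ) + 1) * x))) ∧
    ContDiffOn ℝ 2 Phi10 (Set.Icc 0 π) ∧
    Phi10 0 = 0 ∧ Phi10 π = 0 ∧
    (∫ x in (0:ℝ)..π, Phi10 x * Real.sin x) = 0 ∧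
    (∀ x ∈ Set.Ioo (0:ℝ) π,
      deriv (deriv Phi10) x + Phi10 x = Real.cos x - 3 * (π - 2*x) * Real.sin x) := by
  have closedForm := eqOn_Phi10_phi10ClosedForm
  refine ⟨summable_phiCoeff_mul_sin, contDiff_phi10ClosedForm.contDiffOn.congr closedForm,
    ?zero, ?pi, ?orthogonal, fun x hx ↦ ?equation⟩
  case zero => rw [closedForm (left_mem_Icc.mpr pi_pos.le), phi10ClosedForm_zero]
  case pi => rw [closedForm (right_mem_Icc.mpr pi_pos.le), phi10ClosedForm_pi]
  case orthogonal =>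
    refine Eq.trans (intervalIntegral.integral_congr fun x hx ↦ ?_)
      integral_phi10ClosedForm_mul_sin
    rw [uIcc_of_le pi_pos.le] at hx
    simp only [closedForm hx]
  case equation =>
    have near : Phi10 =ᶠ[nhds x] phi10ClosedForm :=
      closedForm.eventuallyEq_of_mem (Icc_mem_nhds hx.1 hx.2)
    rw [near.deriv.deriv_eq, near.eq_of_nhds, (hasDerivAt_deriv_phi10ClosedForm x).deriv,
      sub_add_cancel, phi10Forcing]

end
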